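/- arXiv:2108.02758 — 6 statements merged into one kernel-verified Lean document; each statement's English description precedes it below -/
import Mathlib

section
/- (Forney formula for generalized Reed–Solomon codes.) If e_j ≠ 0, then e_j = φ^e(α_j) / (f^e)'(α_j), where (f^e)' denotes the formal derivative of the error locator polynomial. -/
open Polynomial
open scoped Classical

noncomputable section

variable {F : Type*} [Field F]

/-- The coefficient of `x^a` in the Laurent expansion of the rational function `h`
in `1/x` (i.e. the expansion at infinity): substituting `x = 1/t`, the rational
function `h(1/t)` equals `t^(deg denom - deg num) * reverse(num)(t)/reverse(denom)(t)`,
and we take the coefficient of `t^(-a)` in its Laurent expansion at `t = 0`. -/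
def coeffAtInf (h : RatFunc F) (a : ℤ) : F :=
  let v : RatFunc F :=
    (RatFunc.X : RatFunc F) ^ ((h.denom.natDegree : ℤ) - (h.num.natDegree : ℤ)) *
      (algebraMap (Polynomial F) (RatFunc F) h.num.reverse /
        algebraMap (Polynomial F) (RatFunc F) h.denom.reverse)
  ((v : LaurentSeries F)).coeff (-a)

variable (F) in
/-- The error locator polynomial `f^e`. -/
def errLoc {n : ℕ} (α : Fin n → F) (e : Fin n → F) : Polynomial F :=
  ∏ j ∈ Finset.univ.filter (fun j => e j ≠ 0), (X - C (α j))

variable (F) in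
/-- The error evaluator polynomial `φ^e`. -/
def errEval {n : ℕ} (α : Fin n → F) (e : Fin n → F) : Polynomial F :=
  ∑ j ∈ Finset.univ.filter (fun j => e j ≠ 0),
    C (e j) * ∏ k ∈ (Finset.univ.filter (fun k => e k ≠ 0)).erase j, (X - C (α k))

variable (F) in
/-- The syndrome `S = φ^e/f^e = ∑_j e_j/(x - α_j)` as a rational function. -/
def synd {n : ℕ} (α : Fin n → F) (e : Fin n → F) : RatFunc F :=
  algebraMap (Polynomial F) (RatFunc F) (errEval F α e) /
    algebraMap (Polynomial F) (RatFunc F) (errLoc F α e)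

end

/-- A linear combination of the products `∏ k ∈ s \ {i}, (X - α k)`, evaluated at a node `α j`,
retains only its `j`-th term. -/
theorem eval_sum_mul_prod_erase_X_sub_C {R ι : Type*} [CommRing R] [DecidableEq ι]
    (s : Finset ι) (α c : ι → R) {j : ι} (hj : j ∈ s) :
    (∑ i ∈ s, C (c i) * ∏ k ∈ s.erase i, (X - C (α k))).eval (α j) =
      c j * ∏ k ∈ s.erase j, (α j - α k) := by
  simp only [eval_finsetSum, eval_mul, eval_C, eval_prod, eval_sub, eval_X]
  refine Finset.sum_eq_single_of_mem j hj fun i _ hij => ?_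
  rw [Finset.prod_eq_zero (Finset.mem_erase.2 ⟨hij.symm, hj⟩) (sub_self _), mul_zero]

/-- **Forney formula for generalized Reed-Solomon codes.**  If `e_j ≠ 0`, then
`e_j = φ^e(α_j) / (f^e)'(α_j)`. -/
theorem forney_formula_RS {F : Type*} [Field F] [Fintype F] {n : ℕ}
    (α : Fin n → F) (hα : Function.Injective α) (e : Fin n → F)
    (j : Fin n) (hj : e j ≠ 0) :
    e j = (errEval F α e).eval (α j) / (Polynomial.derivative (errLoc F α e)).eval (α j) := by
  have hmem : j ∈ Finset.univ.filter (fun k => e k ≠ 0) := by simpa using hj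
  have hderiv := eval_sum_mul_prod_erase_X_sub_C _ α 1 hmem
  simp only [Pi.one_apply, map_one, one_mul] at hderiv
  have hprod : ∏ k ∈ (Finset.univ.filter (fun k => e k ≠ 0)).erase j, (α j - α k) ≠ 0 :=
    Finset.prod_ne_zero_iff.2 fun k hk =>
      sub_ne_zero.2 (hα.ne (Finset.ne_of_mem_erase hk).symm)
  simp only [errEval, errLoc, derivative_prod_finset, derivative_X_sub_C, mul_one]
  rw [eval_sum_mul_prod_erase_X_sub_C _ α e hmem, hderiv, mul_div_cancel_right₀ _ hprod]
end

section
/- Let f ∈ F_q[x]. If the Laurent expansion in 1/x of fS has zero coefficients in all degrees −1, −2, …, −t, then f is a polynomial multiple of the error locator f^e. In particular, if fS is a polynomial then f^e divides f. -/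
open Polynomial
open scoped Classical

/-- Substitution of `T⁻¹` for `X`, from polynomials to Laurent series in `T`. -/
noncomputable def evalInv (F : Type*) [Field F] : Polynomial F →+* LaurentSeries F :=
  eval₂RingHom HahnSeries.C (HahnSeries.single (-1) 1)

lemma coeff_evalInv_neg {F : Type*} [Field F] (p : Polynomial F) (k : ℕ) :
    (evalInv F p).coeff (-(k : ℤ)) = p.coeff k := by
  induction p using Polynomial.induction_on' with
  | add p q hp hq => rw [map_add, HahnSeries.coeff_add, hp, hq, Polynomial.coeff_add]
  | monomial m c =>
    simp [evalInv, HahnSeries.single_pow, HahnSeries.C_apply, HahnSeries.single_mul_single,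
      HahnSeries.coeff_single, Polynomial.coeff_monomial, eq_comm]

lemma coeff_evalInv_of_pos {F : Type*} [Field F] (p : Polynomial F) {k : ℤ} (hk : 0 < k) :
    (evalInv F p).coeff k = 0 := by
  induction p using Polynomial.induction_on' with
  | add p q hp hq => rw [map_add, HahnSeries.coeff_add, hp, hq, add_zero]
  | monomial m c =>
    have : k ≠ -(m : ℤ) := by omega
    simp [evalInv, HahnSeries.single_pow, HahnSeries.C_apply, HahnSeries.single_mul_single,
      this]

lemma coeff_evalInv_of_lt {F : Type*} [Field F] (p : Polynomial F) {k : ℤ}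
    (hk : k < -(p.natDegree : ℤ)) : (evalInv F p).coeff k = 0 := by
  obtain ⟨m, rfl⟩ : ∃ m : ℕ, k = -(m : ℤ) := ⟨k.natAbs, by omega⟩
  rw [coeff_evalInv_neg]
  exact coeff_eq_zero_of_natDegree_lt (by omega)

lemma evalInv_injective (F : Type*) [Field F] : Function.Injective (evalInv F) := by
  intro p q h
  ext k
  rw [← coeff_evalInv_neg, ← coeff_evalInv_neg, h]

lemma coe_algebraMap_ratFunc {F : Type*} [Field F] (p : Polynomial F) :
    ((algebraMap (Polynomial F) (RatFunc F) p : RatFunc F) : LaurentSeries F) =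
      eval₂ HahnSeries.C (HahnSeries.single 1 1) p := by
  induction p using Polynomial.induction_on' with
  | add p q hp hq => rw [map_add, map_add, hp, hq, eval₂_add]
  | monomial m c =>
    rw [← RatFunc.coePolynomial_eq_algebraMap, ← RatFunc.coe_coe]
    simp [← Polynomial.C_mul_X_pow_eq_monomial, HahnSeries.single_pow]

lemma coe_reverse_eq {F : Type*} [Field F] (p : Polynomial F) :
    ((algebraMap (Polynomial F) (RatFunc F) p.reverse : RatFunc F) : LaurentSeries F) =
      HahnSeries.single (p.natDegree : ℤ) 1 * evalInv F p := by
  let T : LaurentSeries F := HahnSeries.single (-1) 1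
  let _ : Invertible T :=
    ⟨HahnSeries.single 1 1, by simp [T, HahnSeries.single_mul_single],
      by simp [T, HahnSeries.single_mul_single]⟩
  have h := eval₂_reverse_mul_pow (HahnSeries.C : F →+* LaurentSeries F) T p
  rw [coe_algebraMap_ratFunc, evalInv, coe_eval₂RingHom, ← h]
  have hT : ⅟T = HahnSeries.single 1 1 := rfl
  rw [hT, mul_left_comm, HahnSeries.single_pow, HahnSeries.single_mul_single]
  simp

/-- The expansion at infinity of `h`, written in the local parameter `T = 1/x`. -/
lemma exists_expansion_mul_denom {F : Type*} [Field F] (h : RatFunc F) :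
    ∃ v : LaurentSeries F, (∀ a, coeffAtInf h a = v.coeff (-a)) ∧
      v * evalInv F h.denom = evalInv F h.num := by
  refine ⟨_, fun a => rfl, ?_⟩
  have hd : evalInv F h.denom ≠ 0 :=
    (map_ne_zero_iff _ (evalInv_injective F)).mpr h.denom_ne_zero
  have hs : (HahnSeries.single (h.denom.natDegree : ℤ) 1 : LaurentSeries F) ≠ 0 := by simp
  rw [map_mul, map_div₀, map_zpow₀, coe_reverse_eq, coe_reverse_eq, RatFunc.coe_X,
    ← RatFunc.single_zpow]
  field_simp
  rw [mul_assoc, mul_comm (evalInv F _), ← mul_assoc, HahnSeries.single_mul_single]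
  simp

lemma exists_polynomial_coeff_evalInv_eq {F : Type*} [Field F] (v : LaurentSeries F) :
    ∃ P : Polynomial F, ∀ k ≤ 0, (evalInv F P).coeff k = v.coeff k := by
  refine ⟨∑ i ∈ Finset.range (v.order.natAbs + 1), monomial i (v.coeff (-(i : ℤ))), ?_⟩
  intro k hk
  obtain ⟨m, rfl⟩ : ∃ m : ℕ, k = -(m : ℤ) := ⟨k.natAbs, by omega⟩
  rw [coeff_evalInv_neg]
  simp only [finsetSum_coeff, coeff_monomial, Finset.sum_ite_eq', Finset.mem_range]
  split_ifs with hm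
  · rfl
  · exact (HahnSeries.coeff_eq_zero_of_lt_order (by omega)).symm

/-- A rational function whose denominator has degree at most `t` and whose expansion at infinity
vanishes in degrees `-1, …, -t` is a polynomial. -/
lemma exists_eq_algebraMap_of_coeffAtInf_eq_zero {F : Type*} [Field F] (h : RatFunc F) (t : ℕ)
    (ht : h.denom.natDegree ≤ t)
    (h0 : ∀ a : ℤ, -(t : ℤ) ≤ a → a ≤ -1 → coeffAtInf h a = 0) :
    ∃ p : Polynomial F, h = algebraMap (Polynomial F) (RatFunc F) p := by
  obtain ⟨v, hv, hmul⟩ := exists_expansion_mul_denom h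
  obtain ⟨P, hP⟩ := exists_polynomial_coeff_evalInv_eq v
  have hR : ∀ k : ℤ, k ≤ t → (v - evalInv F P).coeff k = 0 := by
    intro k hk
    rw [HahnSeries.coeff_sub]
    rcases le_or_gt k 0 with hk0 | hk0
    · rw [hP k hk0, sub_self]
    · rw [coeff_evalInv_of_pos P hk0, sub_zero, ← neg_neg k, ← hv]
      exact h0 _ (by omega) (by omega)
  have hRD : (v - evalInv F P) * evalInv F h.denom = evalInv F (h.num - P * h.denom) := by
    rw [sub_mul, hmul, map_sub, map_mul]
  have hzero : evalInv F (h.num - P * h.denom) = 0 := by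
    ext k
    rw [HahnSeries.coeff_zero]
    rcases le_or_gt k 0 with hk | hk
    · rw [← hRD, HahnSeries.coeff_mul]
      refine Finset.sum_eq_zero fun ij hij => ?_
      have hsum : ij.1 + ij.2 = k := (Finset.mem_antidiagonal.mp hij).2.2
      rcases le_or_gt ij.1 t with h1 | h1
      · rw [hR _ h1, zero_mul]
      · rw [coeff_evalInv_of_lt _ (by omega), mul_zero]
    · exact coeff_evalInv_of_pos _ hk
  have hnum : h.num = P * h.denom :=
    sub_eq_zero.mp ((map_eq_zero_iff _ (evalInv_injective F)).mp hzero)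
  refine ⟨P, ?_⟩
  have hd : algebraMap (Polynomial F) (RatFunc F) h.denom ≠ 0 :=
    RatFunc.algebraMap_ne_zero h.denom_ne_zero
  conv_lhs => rw [← h.num_div_denom]
  rw [hnum, map_mul, mul_div_cancel_right₀ _ hd]

lemma errLoc_ne_zero {F : Type*} [Field F] {n : ℕ} (α e : Fin n → F) : errLoc F α e ≠ 0 :=
  (monic_prod_X_sub_C α _).ne_zero

lemma isCoprime_errLoc_errEval {F : Type*} [Field F] {n : ℕ} {α : Fin n → F}
    (hα : Function.Injective α) (e : Fin n → F) :
    IsCoprime (errLoc F α e) (errEval F α e) := by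
  refine IsCoprime.prod_left fun j hj => ?_
  refine (irreducible_X_sub_C (α j)).coprime_iff_not_dvd.mpr ?_
  rw [dvd_iff_isRoot, IsRoot.def, errEval, eval_finsetSum, Finset.sum_eq_single_of_mem j hj]
  · rw [eval_mul, eval_C, eval_prod]
    refine mul_ne_zero (Finset.mem_filter.mp hj).2 (Finset.prod_ne_zero_iff.mpr fun k hk => ?_)
    simpa [sub_eq_zero] using fun h => (Finset.ne_of_mem_erase hk) (hα h).symm
  · intro i _ hij
    rw [eval_mul, eval_prod,
      Finset.prod_eq_zero (Finset.mem_erase.mpr ⟨hij.symm, hj⟩) (by simp), mul_zero]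

lemma errLoc_dvd_of_mul_synd_eq {F : Type*} [Field F] {n : ℕ} {α : Fin n → F}
    (hα : Function.Injective α) (e : Fin n → F) {f p : Polynomial F}
    (h : algebraMap (Polynomial F) (RatFunc F) f * synd F α e =
      algebraMap (Polynomial F) (RatFunc F) p) :
    errLoc F α e ∣ f := by
  refine (isCoprime_errLoc_errEval hα e).dvd_of_dvd_mul_right (Dvd.intro_left p ?_)
  rw [synd, ← mul_div_assoc,
    div_eq_iff (RatFunc.algebraMap_ne_zero (errLoc_ne_zero α e)), ← map_mul, ← map_mul] at h
  exact (RatFunc.algebraMap_injective F h).symm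

open scoped Classical in
/-- If the Laurent expansion of `fS` in `1/x` has no terms in degrees `-1, -2, …, -t`,
then `f` is a multiple of the error locator `f^e`.  In particular, if `fS` is a
polynomial then `f^e` divides `f`. -/
theorem locator_characterization_RS {F : Type*} [Field F] [Fintype F] {n : ℕ}
    (α : Fin n → F) (hα : Function.Injective α) (e : Fin n → F)
    (t : ℕ) (ht : t = (Finset.univ.filter (fun j => e j ≠ 0)).card)
    (f : Polynomial F) :
    ((∀ a : ℤ, -(t : ℤ) ≤ a → a ≤ -1 →
        coeffAtInf (algebraMap (Polynomial F) (RatFunc F) f * synd F α e) a = 0) →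
      errLoc F α e ∣ f) ∧
    ((∃ p : Polynomial F,
        algebraMap (Polynomial F) (RatFunc F) f * synd F α e =
          algebraMap (Polynomial F) (RatFunc F) p) →
      errLoc F α e ∣ f) := by
  refine ⟨fun h0 => ?_, fun ⟨p, hp⟩ => errLoc_dvd_of_mul_synd_eq hα e hp⟩
  have hdeg : (errLoc F α e).natDegree = t := by
    rw [ht, errLoc, natDegree_finsetProd_X_sub_C_eq_card]
  obtain ⟨p, hp⟩ := exists_eq_algebraMap_of_coeffAtInf_eq_zero _ t (by
    rw [synd, ← mul_div_assoc, ← map_mul, ← hdeg]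
    exact natDegree_le_of_dvd (RatFunc.denom_div_dvd _ _) (errLoc_ne_zero α e)) h0
  exact errLoc_dvd_of_mul_synd_eq hα e hp
end

section
/- (Invariants of the Berlekamp–Massey algorithm.) For all m ≥ 0: (1) f^(m) is monic of degree at most m; (2) deg(f^(m)S − φ^(m)) ≤ −m + deg f^(m) − 1 (in particular f^(m)S has no terms in degrees −1, −2, …, −m + deg f^(m)); (3) g^(m)S − ψ^(m) is monic of degree −deg f^(m); (4) deg g^(m) ≤ m − deg f^(m). -/
open Polynomial
open scoped Classical

noncomputable section

variable {F : Type*} [Field F]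

variable (F) in
/-- One step of the Berlekamp--Massey algorithm: the state is the quadruple
`(f^(m), φ^(m), g^(m), ψ^(m))`. -/
def BMstep (S : RatFunc F) (m : ℕ)
    (st : Polynomial F × Polynomial F × Polynomial F × Polynomial F) :
    Polynomial F × Polynomial F × Polynomial F × Polynomial F :=
  let f := st.1
  let φ := st.2.1
  let g := st.2.2.1
  let ψ := st.2.2.2
  let d : ℕ := f.natDegree
  -- μ is the coefficient of x^(d-m-1) in the Laurent expansion of f^(m)·S in 1/x
  let μ : F := coeffAtInf (algebraMap (Polynomial F) (RatFunc F) f * S) ((d : ℤ) - m - 1)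
  let p : ℤ := 2 * d - m - 1
  if μ = 0 ∨ 0 ≤ p then
    (f - C μ * X ^ p.toNat * g, φ - C μ * X ^ p.toNat * ψ, g, ψ)
  else
    (X ^ (-p).toNat * f - C μ * g, X ^ (-p).toNat * φ - C μ * ψ, C μ⁻¹ * f, C μ⁻¹ * φ)

variable (F) in
/-- The Berlekamp--Massey data `(f^(m), φ^(m), g^(m), ψ^(m))`, initialized at
`(1, 0, 0, -1)`. -/
def BM (S : RatFunc F) : ℕ → Polynomial F × Polynomial F × Polynomial F × Polynomial F
  | 0 => (1, 0, 0, -1)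
  | m + 1 => BMstep F S m (BM S m)

end

section LaurentExpansionAtInfinity

open scoped RatFunc

variable {F : Type*} [Field F]

/-- Evaluating a polynomial at `1/X` amounts to reversing it, up to a power of `X`. -/
lemma eval₂_X_inv_eq_reverse_div (p : F[X]) :
    p.eval₂ (RatFunc.C : F →+* RatFunc F) (RatFunc.X : RatFunc F)⁻¹ =
      algebraMap F[X] (RatFunc F) p.reverse / RatFunc.X ^ p.natDegree := by
  let : Invertible (RatFunc.X : RatFunc F)⁻¹ :=
    ⟨RatFunc.X, mul_inv_cancel₀ RatFunc.X_ne_zero, inv_mul_cancel₀ RatFunc.X_ne_zero⟩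
  have h := eval₂_reverse_mul_pow (RatFunc.C : F →+* RatFunc F) (RatFunc.X : RatFunc F)⁻¹ p
  have hX (q : F[X]) : q.eval₂ (RatFunc.C : F →+* RatFunc F) RatFunc.X =
      algebraMap F[X] (RatFunc F) q := by
    induction q using Polynomial.induction_on' with
    | add p q hp hq => simp [eval₂_add, hp, hq]
    | monomial k a => simp [← C_mul_X_pow_eq_monomial, RatFunc.algebraMap_C]
  rw [← h, div_eq_mul_inv, ← hX, inv_pow]
  rfl

lemma eval₂_X_inv_injective :
    Function.Injective (eval₂RingHom (RatFunc.C : F →+* RatFunc F) (RatFunc.X : RatFunc F)⁻¹) := by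
  rw [injective_iff_map_eq_zero]
  intro p hp
  rw [coe_eval₂RingHom, eval₂_X_inv_eq_reverse_div, div_eq_zero_iff] at hp
  simpa [RatFunc.X_ne_zero] using hp

/-- The Laurent expansion in `1/x`, as a ring homomorphism; the variable of the target is `1/x`. -/
noncomputable def laurentAtInf : RatFunc F →+* LaurentSeries F :=
  (algebraMap (RatFunc F) (LaurentSeries F)).comp
    (RatFunc.liftRingHom (eval₂RingHom (RatFunc.C : F →+* RatFunc F) (RatFunc.X : RatFunc F)⁻¹)
      (nonZeroDivisors_le_comap_nonZeroDivisors_of_injective _ eval₂_X_inv_injective))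

lemma coeffAtInf_eq_coeff_laurentAtInf (h : RatFunc F) (a : ℤ) :
    coeffAtInf h a = (laurentAtInf h).coeff (-a) := by
  have hX : (RatFunc.X : RatFunc F) ≠ 0 := RatFunc.X_ne_zero
  unfold coeffAtInf laurentAtInf
  rw [RingHom.comp_apply, RatFunc.liftRingHom_apply, coe_eval₂RingHom,
    eval₂_X_inv_eq_reverse_div, eval₂_X_inv_eq_reverse_div, zpow_sub₀ hX, zpow_natCast,
    zpow_natCast]
  field_simp

lemma laurentAtInf_C (c : F) :
    laurentAtInf (algebraMap F[X] (RatFunc F) (C c)) = HahnSeries.single 0 c := by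
  simp only [laurentAtInf, RingHom.comp_apply, RatFunc.liftRingHom_algebraMap, coe_eval₂RingHom,
    eval₂_C]
  rw [← RatFunc.algebraMap_C, ← IsScalarTower.algebraMap_apply F[X] (RatFunc F) (LaurentSeries F)]
  simp

lemma laurentAtInf_X_pow (k : ℕ) :
    laurentAtInf (algebraMap F[X] (RatFunc F) (X ^ k)) = HahnSeries.single (-(k : ℤ)) 1 := by
  simp only [laurentAtInf, RingHom.comp_apply, RatFunc.liftRingHom_algebraMap, coe_eval₂RingHom,
    map_pow]
  simp

lemma coeffAtInf_sub (h k : RatFunc F) (a : ℤ) :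
    coeffAtInf (h - k) a = coeffAtInf h a - coeffAtInf k a := by
  simp [coeffAtInf_eq_coeff_laurentAtInf]

lemma coeffAtInf_C_mul (c : F) (h : RatFunc F) (a : ℤ) :
    coeffAtInf (algebraMap F[X] (RatFunc F) (C c) * h) a = c * coeffAtInf h a := by
  rw [coeffAtInf_eq_coeff_laurentAtInf, map_mul, laurentAtInf_C, HahnSeries.coeff_single_mul,
    sub_zero, coeffAtInf_eq_coeff_laurentAtInf]

lemma coeffAtInf_X_pow_mul (k : ℕ) (h : RatFunc F) (a : ℤ) :
    coeffAtInf (algebraMap F[X] (RatFunc F) (X ^ k) * h) a = coeffAtInf h (a - k) := by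
  rw [coeffAtInf_eq_coeff_laurentAtInf, map_mul, laurentAtInf_X_pow, HahnSeries.coeff_single_mul,
    one_mul, coeffAtInf_eq_coeff_laurentAtInf]
  congr 1
  ring

lemma coeffAtInf_algebraMap (p : F[X]) (a : ℤ) :
    coeffAtInf (algebraMap F[X] (RatFunc F) p) a = if 0 ≤ a then p.coeff a.toNat else 0 := by
  rw [coeffAtInf_eq_coeff_laurentAtInf]
  induction p using Polynomial.induction_on' with
  | add p q hp hq =>
    rw [map_add, map_add, HahnSeries.coeff_add, hp, hq, coeff_add]
    split_ifs <;> simp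
  | monomial k c =>
    rw [← C_mul_X_pow_eq_monomial, map_mul, map_mul, laurentAtInf_C, laurentAtInf_X_pow,
      HahnSeries.single_mul_single, HahnSeries.coeff_single, coeff_C_mul_X_pow]
    split_ifs <;> first | omega | simp

lemma order_laurentAtInf_algebraMap {p : F[X]} (hp : p ≠ 0) :
    (laurentAtInf (algebraMap F[X] (RatFunc F) p)).order = -(p.natDegree : ℤ) := by
  have key (i : ℤ) := coeffAtInf_algebraMap p (-i)
  simp only [coeffAtInf_eq_coeff_laurentAtInf, neg_neg] at key
  apply le_antisymm
  · apply HahnSeries.order_le_of_coeff_ne_zero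
    simpa [key] using hp
  · rw [HahnSeries.le_order_iff_forall]
    · intro j hj
      rw [key]
      split_ifs
      · exact coeff_eq_zero_of_natDegree_lt (by omega)
      · rfl
    · simpa using hp

/-- A proper fraction has no terms of nonnegative degree. -/
lemma coeffAtInf_div_eq_zero {p q : F[X]} (hpq : p.degree < q.degree) {a : ℤ} (ha : 0 ≤ a) :
    coeffAtInf (algebraMap F[X] (RatFunc F) p / algebraMap F[X] (RatFunc F) q) a = 0 := by
  rw [coeffAtInf_eq_coeff_laurentAtInf]
  rcases eq_or_ne p 0 with rfl | hp
  · simp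
  have hq : q ≠ 0 := ne_zero_of_degree_gt hpq
  apply HahnSeries.coeff_eq_zero_of_lt_order
  have hp' : algebraMap F[X] (RatFunc F) p ≠ 0 := by simpa using hp
  have hq' : algebraMap F[X] (RatFunc F) q ≠ 0 := by simpa using hq
  have hmul := congrArg HahnSeries.order (congrArg laurentAtInf (div_mul_cancel₀
    (algebraMap F[X] (RatFunc F) p) hq'))
  rw [map_mul, HahnSeries.order_mul (by simp [hp, hq]) (by simpa using hq),
    order_laurentAtInf_algebraMap hp, order_laurentAtInf_algebraMap hq] at hmul
  have := natDegree_lt_natDegree hp hpq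
  omega

end LaurentExpansionAtInfinity

section BerlekampMassey

variable {F : Type*} [Field F]

lemma degree_errEval_lt_degree_errLoc {n : ℕ} (α e : Fin n → F) :
    (errEval F α e).degree < (errLoc F α e).degree := by
  have hdeg (s : Finset (Fin n)) : (∏ j ∈ s, (X - C (α j))).degree = (s.card : WithBot ℕ) := by
    simp [degree_prod]
  unfold errEval errLoc
  rw [hdeg]
  refine (degree_sum_le _ _).trans_lt ((Finset.sup_lt_iff (WithBot.bot_lt_coe _)).2 fun j hj => ?_)
  rw [degree_C_mul (Finset.mem_filter.1 hj).2, hdeg]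
  exact_mod_cast Finset.card_erase_lt_of_mem hj

/-- The properties of the state of the Berlekamp-Massey algorithm preserved at every step. -/
structure BMInvariant (S : RatFunc F) (m : ℕ) (f φ g ψ : F[X]) : Prop where
  monic : f.Monic
  natDegree_le : f.natDegree ≤ m
  coeff_f : ∀ a : ℤ, (f.natDegree : ℤ) - m - 1 < a →
    coeffAtInf (algebraMap F[X] (RatFunc F) f * S - algebraMap F[X] (RatFunc F) φ) a = 0
  leading_g : coeffAtInf (algebraMap F[X] (RatFunc F) g * S - algebraMap F[X] (RatFunc F) ψ)
    (-(f.natDegree : ℤ)) = 1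
  coeff_g : ∀ a : ℤ, -(f.natDegree : ℤ) < a →
    coeffAtInf (algebraMap F[X] (RatFunc F) g * S - algebraMap F[X] (RatFunc F) ψ) a = 0
  natDegree_g : (g.natDegree : ℤ) ≤ (m : ℤ) - f.natDegree

namespace BMInvariant

lemma zero {S : RatFunc F} (hS : ∀ a : ℤ, 0 ≤ a → coeffAtInf S a = 0) :
    BMInvariant S 0 1 0 0 (-1) := by
  have h1 (a : ℤ) := coeffAtInf_algebraMap (1 : F[X]) a
  rw [map_one] at h1
  refine ⟨monic_one, by simp, fun a ha => ?_, by simp [h1], fun a ha => ?_, by simp⟩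
  · simpa using hS a (by simp at ha; omega)
  · have ha' : 0 < a := by simpa using ha
    simp [h1, ha'.le, coeff_one, ha'.not_ge]

variable {S : RatFunc F} {m : ℕ} {f φ g ψ : F[X]}

lemma coeff_sub_eq (h : BMInvariant S m f φ g ψ) :
    coeffAtInf (algebraMap F[X] (RatFunc F) f * S - algebraMap F[X] (RatFunc F) φ)
      ((f.natDegree : ℤ) - m - 1) =
    coeffAtInf (algebraMap F[X] (RatFunc F) f * S) ((f.natDegree : ℤ) - m - 1) := by
  have := h.natDegree_le
  rw [coeffAtInf_sub, coeffAtInf_algebraMap, if_neg (by omega), sub_zero]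

/-- Combining the two rows of the state with coefficients `X ^ k` and `-μ X ^ l`. -/
lemma coeffAtInf_comb (S : RatFunc F) (f φ g ψ : F[X]) (k l : ℕ) (μ : F) (a : ℤ) :
    coeffAtInf (algebraMap F[X] (RatFunc F) (X ^ k * f - C μ * X ^ l * g) * S -
      algebraMap F[X] (RatFunc F) (X ^ k * φ - C μ * X ^ l * ψ)) a =
    coeffAtInf (algebraMap F[X] (RatFunc F) f * S - algebraMap F[X] (RatFunc F) φ) (a - k) -
      μ * coeffAtInf (algebraMap F[X] (RatFunc F) g * S - algebraMap F[X] (RatFunc F) ψ)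
        (a - l) := by
  rw [← coeffAtInf_X_pow_mul, ← coeffAtInf_X_pow_mul, ← coeffAtInf_C_mul, ← coeffAtInf_sub]
  congr 1
  simp only [map_sub, map_mul]
  ring

lemma comb_natDegree {f g : F[X]} {k l : ℕ} (μ : F) (hf : f.Monic)
    (hlt : l + g.natDegree < k + f.natDegree) :
    (X ^ k * f - C μ * X ^ l * g).Monic ∧
      (X ^ k * f - C μ * X ^ l * g).natDegree = k + f.natDegree := by
  have hX : (X ^ k * f).Monic := (monic_X_pow k).mul hf
  have hd : (X ^ k * f).natDegree = k + f.natDegree := by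
    rw [(monic_X_pow k).natDegree_mul hf, natDegree_X_pow]
  have hg : (C μ * X ^ l * g).natDegree < (X ^ k * f).natDegree := by
    rw [hd]
    refine (natDegree_mul_le.trans ?_).trans_lt hlt
    gcongr
    exact natDegree_C_mul_X_pow_le μ l
  refine ⟨hX.sub_of_left (degree_lt_degree hg), ?_⟩
  rw [natDegree_sub_eq_left_of_natDegree_lt hg, hd]

lemma step_of_coeff_eq_zero (h : BMInvariant S m f φ g ψ)
    (hμ : coeffAtInf (algebraMap F[X] (RatFunc F) f * S) ((f.natDegree : ℤ) - m - 1) = 0) :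
    BMInvariant S (m + 1) f φ g ψ where
  monic := h.monic
  natDegree_le := h.natDegree_le.trans m.le_succ
  coeff_f a ha := by
    rcases eq_or_ne a ((f.natDegree : ℤ) - m - 1) with rfl | hne
    · rw [h.coeff_sub_eq, hμ]
    · exact h.coeff_f a (by push_cast at ha; omega)
  leading_g := h.leading_g
  coeff_g := h.coeff_g
  natDegree_g := by have := h.natDegree_g; push_cast; omega

lemma step_of_nonneg (h : BMInvariant S m f φ g ψ) {l : ℕ}
    (hl : (l : ℤ) = 2 * f.natDegree - m - 1) {μ : F}
    (hμ : coeffAtInf (algebraMap F[X] (RatFunc F) f * S) ((f.natDegree : ℤ) - m - 1) = μ) :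
    BMInvariant S (m + 1) (f - C μ * X ^ l * g) (φ - C μ * X ^ l * ψ) g ψ := by
  have hg := h.natDegree_g
  obtain ⟨hmonic, hdeg⟩ := comb_natDegree (k := 0) (l := l) (g := g) μ h.monic (by omega)
  have hcomb (a : ℤ) := coeffAtInf_comb S f φ g ψ 0 l μ a
  simp only [pow_zero, one_mul, zero_add, Nat.cast_zero, sub_zero] at hmonic hdeg hcomb
  refine ⟨hmonic, ?_, fun a ha => ?_, ?_, ?_, ?_⟩ <;> (try rw [hdeg])
  · exact h.natDegree_le.trans m.le_succ
  · rw [hdeg] at ha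
    push_cast at ha
    rw [hcomb]
    rcases eq_or_ne a ((f.natDegree : ℤ) - m - 1) with rfl | hne
    · rw [h.coeff_sub_eq, hμ, show (f.natDegree : ℤ) - m - 1 - l = -f.natDegree by omega,
        h.leading_g, mul_one, sub_self]
    · rw [h.coeff_f a (by omega), h.coeff_g _ (by omega), mul_zero, sub_zero]
  · exact h.leading_g
  · exact h.coeff_g
  · push_cast; omega

lemma step_of_neg (h : BMInvariant S m f φ g ψ) {k : ℕ} (_ : 0 < k)
    (hk : (k : ℤ) = -(2 * f.natDegree - m - 1)) {μ : F} (hμ0 : μ ≠ 0)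
    (hμ : coeffAtInf (algebraMap F[X] (RatFunc F) f * S) ((f.natDegree : ℤ) - m - 1) = μ) :
    BMInvariant S (m + 1) (X ^ k * f - C μ * g) (X ^ k * φ - C μ * ψ)
      (C μ⁻¹ * f) (C μ⁻¹ * φ) := by
  have hg := h.natDegree_g
  obtain ⟨hmonic, hdeg⟩ := comb_natDegree (k := k) (l := 0) (g := g) μ h.monic (by omega)
  have hcomb (a : ℤ) := coeffAtInf_comb S f φ g ψ k 0 μ a
  simp only [pow_zero, mul_one, Nat.cast_zero, sub_zero] at hmonic hdeg hcomb
  have hscale (a : ℤ) : coeffAtInf (algebraMap F[X] (RatFunc F) (C μ⁻¹ * f) * S -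
      algebraMap F[X] (RatFunc F) (C μ⁻¹ * φ)) a = μ⁻¹ * coeffAtInf
        (algebraMap F[X] (RatFunc F) f * S - algebraMap F[X] (RatFunc F) φ) a := by
    rw [← coeffAtInf_C_mul]
    congr 1
    simp only [map_mul]
    ring
  refine ⟨hmonic, ?_, fun a ha => ?_, ?_, fun a ha => ?_, ?_⟩ <;> (try rw [hdeg] at *)
  · omega
  · push_cast at ha
    rw [hcomb]
    rcases eq_or_ne a (-(f.natDegree : ℤ)) with rfl | hne
    · rw [h.leading_g, show -(f.natDegree : ℤ) - k = f.natDegree - m - 1 by omega,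
        h.coeff_sub_eq, hμ, mul_one, sub_self]
    · rw [h.coeff_f _ (by omega), h.coeff_g a (by omega), mul_zero, sub_zero]
  · rw [hscale, show -((k + f.natDegree : ℕ) : ℤ) = f.natDegree - m - 1 by push_cast; omega,
      h.coeff_sub_eq, hμ, inv_mul_cancel₀ hμ0]
  · push_cast at ha
    rw [hscale, h.coeff_f a (by omega), mul_zero]
  · have := natDegree_C_mul_le μ⁻¹ f
    push_cast
    omega

end BMInvariant

lemma BM_invariant {S : RatFunc F} (hS : ∀ a : ℤ, 0 ≤ a → coeffAtInf S a = 0) (m : ℕ) :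
    BMInvariant S m (BM F S m).1 (BM F S m).2.1 (BM F S m).2.2.1 (BM F S m).2.2.2 := by
  induction m with
  | zero => exact BMInvariant.zero hS
  | succ m ih =>
    obtain ⟨f, φ, g, ψ, hst⟩ : ∃ f φ g ψ, BM F S m = (f, φ, g, ψ) := ⟨_, _, _, _, rfl⟩
    simp only [hst] at ih
    simp only [BM, hst, BMstep]
    generalize hμ : coeffAtInf (algebraMap F[X] (RatFunc F) f * S) ((f.natDegree : ℤ) - m - 1) = μ
    rcases eq_or_ne μ 0 with rfl | hμ0
    · simpa using ih.step_of_coeff_eq_zero hμ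
    · by_cases hp : 0 ≤ 2 * (f.natDegree : ℤ) - m - 1
      · simpa only [hp, or_true, if_true] using ih.step_of_nonneg (Int.toNat_of_nonneg hp) hμ
      · simpa only [hμ0, hp, or_self, if_false] using
          ih.step_of_neg (by omega) (Int.toNat_of_nonneg (by omega)) hμ0 hμ

end BerlekampMassey

/-- **Invariants of the Berlekamp--Massey algorithm** (Theorem `t:BM`):
for all `m ≥ 0`, writing `(f^(m), φ^(m), g^(m), ψ^(m)) = BM S m` and `d = deg f^(m)`:
(1) `f^(m)` is monic of degree at most `m`;
(2) `deg (f^(m)S - φ^(m)) ≤ -m + d - 1`;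
(3) `g^(m)S - ψ^(m)` is monic of degree `-d`;
(4) `deg g^(m) ≤ m - d`.
Degree statements about rational functions are expressed via the coefficients of the
Laurent expansion in `1/x`. -/
theorem berlekamp_massey_invariants {F : Type*} [Field F] [Fintype F] {n : ℕ}
    (α : Fin n → F) (hα : Function.Injective α) (e : Fin n → F)
    (S : RatFunc F) (hS : S = synd F α e) (m : ℕ) :
    ((BM F S m).1.Monic ∧ (BM F S m).1.natDegree ≤ m) ∧
    (∀ a : ℤ, ((BM F S m).1.natDegree : ℤ) - m - 1 < a →
      coeffAtInf (algebraMap (Polynomial F) (RatFunc F) (BM F S m).1 * S -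
        algebraMap (Polynomial F) (RatFunc F) (BM F S m).2.1) a = 0) ∧
    (coeffAtInf (algebraMap (Polynomial F) (RatFunc F) (BM F S m).2.2.1 * S -
        algebraMap (Polynomial F) (RatFunc F) (BM F S m).2.2.2)
        (-((BM F S m).1.natDegree : ℤ)) = 1 ∧
      ∀ a : ℤ, -((BM F S m).1.natDegree : ℤ) < a →
        coeffAtInf (algebraMap (Polynomial F) (RatFunc F) (BM F S m).2.2.1 * S -
          algebraMap (Polynomial F) (RatFunc F) (BM F S m).2.2.2) a = 0) ∧
    ((BM F S m).2.2.1.natDegree : ℤ) ≤ (m : ℤ) - (BM F S m).1.natDegree := by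
  have h := BM_invariant (S := S) (fun a ha => by
    rw [hS]
    exact coeffAtInf_div_eq_zero (degree_errEval_lt_degree_errLoc α e) ha) m
  exact ⟨⟨h.monic, h.natDegree_le⟩, h.coeff_f, ⟨h.leading_g, h.coeff_g⟩, h.natDegree_g⟩
end

section
/- For all m ≥ 0, the polynomial f^(m) produced by the Berlekamp–Massey algorithm satisfies deg f^(m) ≤ t, where t is the weight of the error vector e. -/
open Polynomial
open scoped Classical

namespace BerlekampMassey

variable {F : Type*} [Field F]

/-- The expansion of a polynomial in powers of `1/x`, where `1/x` is the variable of the ring of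
Laurent series. -/
noncomputable def expand : F[X] →+* LaurentSeries F :=
  eval₂RingHom HahnSeries.C (HahnSeries.single (-1 : ℤ) (1 : F))

lemma expand_monomial (n : ℕ) (a : F) :
    expand (monomial n a) = HahnSeries.single (-(n : ℤ)) a := by
  simp [expand, eval₂_monomial, HahnSeries.single_pow, HahnSeries.C_apply]

lemma expand_C_mul_X_pow (n : ℕ) (a : F) :
    expand (C a * X ^ n) = HahnSeries.single (-(n : ℤ)) a := by
  rw [C_mul_X_pow_eq_monomial, expand_monomial]

lemma expand_C (a : F) : expand (C a) = HahnSeries.single 0 a := by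
  simpa using expand_C_mul_X_pow 0 a

lemma expand_X_pow (n : ℕ) : expand (X ^ n : F[X]) = HahnSeries.single (-(n : ℤ)) 1 := by
  simpa using expand_C_mul_X_pow n (1 : F)

lemma coeff_expand_neg (p : F[X]) (k : ℕ) : (expand p).coeff (-(k : ℤ)) = p.coeff k := by
  induction p using Polynomial.induction_on' with
  | add p q hp hq => simp [hp, hq]
  | monomial n a =>
    rw [expand_monomial, coeff_monomial, HahnSeries.coeff_single]
    simp [eq_comm]

lemma coeff_expand_of_pos (p : F[X]) {k : ℤ} (hk : 0 < k) : (expand p).coeff k = 0 := by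
  induction p using Polynomial.induction_on' with
  | add p q hp hq => simp [hp, hq]
  | monomial n a =>
    rw [expand_monomial, HahnSeries.coeff_single_of_ne (by omega)]

lemma expand_injective : Function.Injective (expand : F[X] →+* LaurentSeries F) := by
  intro p q h
  ext k
  rw [← coeff_expand_neg, h, coeff_expand_neg]

lemma order_expand {p : F[X]} (hp : p ≠ 0) : (expand p).order = -(p.natDegree : ℤ) := by
  have hp' : expand p ≠ 0 := (map_ne_zero_iff _ expand_injective).2 hp
  refine le_antisymm (HahnSeries.order_le_of_coeff_ne_zero ?_) ?_
  · simpa [coeff_expand_neg] using hp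
  · have h := mt HahnSeries.coeff_order_eq_zero.1 hp'
    by_contra! hlt
    obtain ⟨k, hk⟩ : ∃ k : ℕ, (expand p).order = -(k : ℤ) :=
      ⟨(-(expand p).order).toNat, by omega⟩
    rw [hk, coeff_expand_neg] at h
    exact h (coeff_eq_zero_of_natDegree_lt (by omega))

lemma expand_eq_single_mul_reverse (p : F[X]) :
    expand p = HahnSeries.single (-(p.natDegree : ℤ)) 1 *
      ((p.reverse : PowerSeries F) : LaurentSeries F) := by
  ext k
  rw [HahnSeries.coeff_single_mul, one_mul, sub_neg_eq_add, PowerSeries.coeff_coe]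
  split_ifs with h
  · obtain ⟨j, rfl⟩ : ∃ j : ℕ, k = -(j : ℤ) := ⟨(-k).toNat, by omega⟩
    rw [coeff_expand_neg, coeff_eq_zero_of_natDegree_lt (by omega)]
  · rw [Polynomial.coeff_coe, coeff_reverse]
    rcases le_or_gt k 0 with hk | hk
    · obtain ⟨j, rfl⟩ : ∃ j : ℕ, k = -(j : ℤ) := ⟨(-k).toNat, by omega⟩
      rw [coeff_expand_neg, revAt_le (by omega)]
      congr 1
      omega
    · rw [coeff_expand_of_pos _ hk, revAt_eq_self_of_lt (by omega),
        coeff_eq_zero_of_natDegree_lt (by omega)]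

/-- The Laurent expansion in `1/x` of a rational function. -/
noncomputable def expandRat : RatFunc F →+* LaurentSeries F :=
  RatFunc.liftRingHom expand (nonZeroDivisors_le_comap_nonZeroDivisors_of_injective _
    expand_injective)

lemma expandRat_algebraMap (p : F[X]) :
    expandRat (algebraMap F[X] (RatFunc F) p) = expand p :=
  RatFunc.liftRingHom_algebraMap _ _ _

lemma coeffAtInf_eq (h : RatFunc F) (a : ℤ) :
    coeffAtInf h a = (expandRat h).coeff (-a) := by
  have key : ((RatFunc.X ^ ((h.denom.natDegree : ℤ) - (h.num.natDegree : ℤ)) *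
      (algebraMap F[X] (RatFunc F) h.num.reverse /
        algebraMap F[X] (RatFunc F) h.denom.reverse) : RatFunc F) : LaurentSeries F) =
      expandRat h := by
    have hc (q : F[X]) : ((algebraMap F[X] (RatFunc F) q : RatFunc F) : LaurentSeries F) =
      ((q : PowerSeries F) : LaurentSeries F) := (RatFunc.coe_coe q).symm
    have hX : (HahnSeries.single (1 : ℤ) (1 : F)) ≠ 0 := by simp
    rw [expandRat, RatFunc.liftRingHom_apply, expand_eq_single_mul_reverse h.num,
      expand_eq_single_mul_reverse h.denom, map_mul, map_div₀, map_zpow₀, hc, hc, RatFunc.coe_X,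
      mul_div_mul_comm, RatFunc.single_zpow (-(h.num.natDegree : ℤ)),
      RatFunc.single_zpow (-(h.denom.natDegree : ℤ)), zpow_sub₀ hX, zpow_neg,
      zpow_neg, inv_div_inv]
  rw [coeffAtInf, key]

/-- The invariants of the Berlekamp–Massey state after `m` steps, for a syndrome with Laurent
expansion `s`: the degree of `f s - φ` is less than `deg f - m`, and `g s - ψ` is monic of
degree `-deg f`. -/
structure Invariant (s : LaurentSeries F) (m : ℕ) (st : F[X] × F[X] × F[X] × F[X]) : Prop where
  monic : st.1.Monic
  natDegree_add_le : st.2.2.1.natDegree + st.1.natDegree ≤ m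
  coeff_fst : ∀ k : ℤ, k ≤ m - st.1.natDegree →
    (expand st.1 * s - expand st.2.1).coeff k = 0
  coeff_snd : ∀ k : ℤ, k < st.1.natDegree →
    (expand st.2.2.1 * s - expand st.2.2.2).coeff k = 0
  coeff_snd_natDegree : (expand st.2.2.1 * s - expand st.2.2.2).coeff st.1.natDegree = 1

lemma Invariant.zero {s : LaurentSeries F} (hs : ∀ k : ℤ, k ≤ 0 → s.coeff k = 0) :
    Invariant s 0 (1, 0, 0, -1) where
  monic := monic_one
  natDegree_add_le := by simp
  coeff_fst k hk := by simpa using hs k (by simpa using hk)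
  coeff_snd k hk := by
    have : k ≠ 0 := by simp at hk; omega
    simp [HahnSeries.coeff_one, this]
  coeff_snd_natDegree := by simp

/-- The step that keeps the degree of `f`. -/
lemma Invariant.step_of_nonneg {s : LaurentSeries F} {m : ℕ} {f φ g ψ : F[X]}
    (h : Invariant s m (f, φ, g, ψ)) {μ : F} {p : ℕ} (hp : (p : ℤ) = 2 * f.natDegree - m - 1)
    (hμ : (expand f * s - expand φ).coeff (m + 1 - f.natDegree) = μ) :
    Invariant s (m + 1) (f - C μ * X ^ p * g, φ - C μ * X ^ p * ψ, g, ψ) := by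
  obtain ⟨h1, h2, h3, h4, h5⟩ := h
  simp only at h1 h2 h3 h4 h5
  have hlt : (C μ * X ^ p * g).degree < f.degree := by
    refine degree_lt_degree ((natDegree_mul_le).trans_lt ?_)
    have := natDegree_C_mul_X_pow_le μ p
    omega
  have hd : (f - C μ * X ^ p * g).natDegree = f.natDegree :=
    natDegree_eq_of_degree_eq (degree_sub_eq_left_of_degree_lt hlt)
  have hR : expand (f - C μ * X ^ p * g) * s - expand (φ - C μ * X ^ p * ψ) =
      (expand f * s - expand φ) -
        HahnSeries.single (-(p : ℤ)) μ * (expand g * s - expand ψ) := by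
    rw [← expand_C_mul_X_pow]
    simp only [map_sub, map_mul]
    ring
  refine ⟨h1.sub_of_left hlt, ?_, ?_, ?_, ?_⟩ <;> simp only [hd]
  · omega
  · intro k hk
    rw [hR, HahnSeries.coeff_sub, HahnSeries.coeff_single_mul]
    push_cast at hk
    rcases hk.lt_or_eq with hk | rfl
    · rw [h3 k (by omega), h4 _ (by omega), mul_zero, sub_zero]
    · rw [hμ, show (m : ℤ) + 1 - f.natDegree - -(p : ℤ) = f.natDegree by omega, h5, mul_one,
        sub_self]
  · exact h4
  · exact h5

/-- The step that does nothing because the discrepancy vanishes. -/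
lemma Invariant.step_of_eq_zero {s : LaurentSeries F} {m : ℕ} {f φ g ψ : F[X]}
    (h : Invariant s m (f, φ, g, ψ))
    (hμ : (expand f * s - expand φ).coeff (m + 1 - f.natDegree) = 0) :
    Invariant s (m + 1) (f, φ, g, ψ) := by
  obtain ⟨h1, h2, h3, h4, h5⟩ := h
  simp only at h1 h2 h3 h4 h5
  refine ⟨h1, h2.trans (Nat.le_succ m), fun k hk => ?_, h4, h5⟩
  push_cast at hk
  rcases hk.lt_or_eq with hk | rfl
  · exact h3 k (by omega)
  · exact hμ

/-- The step that raises the degree of `f`. -/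
lemma Invariant.step_of_neg {s : LaurentSeries F} {m : ℕ} {f φ g ψ : F[X]}
    (h : Invariant s m (f, φ, g, ψ)) {μ : F} {p : ℕ} (hp : -(p : ℤ) = 2 * f.natDegree - m - 1)
    (hμ : (expand f * s - expand φ).coeff (m + 1 - f.natDegree) = μ) (hμ0 : μ ≠ 0) :
    Invariant s (m + 1) (X ^ p * f - C μ * g, X ^ p * φ - C μ * ψ, C μ⁻¹ * f, C μ⁻¹ * φ) := by
  obtain ⟨h1, h2, h3, h4, h5⟩ := h
  simp only at h1 h2 h3 h4 h5
  have hmonic : (X ^ p * f).Monic := (monic_X_pow p).mul h1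
  have hdeg : (X ^ p * f).natDegree = p + f.natDegree := by
    rw [(monic_X_pow p).natDegree_mul h1, natDegree_X_pow]
  have hlt : (C μ * g).degree < (X ^ p * f).degree := by
    refine degree_lt_degree ((natDegree_C_mul_le _ _).trans_lt ?_)
    omega
  have hd : (X ^ p * f - C μ * g).natDegree = p + f.natDegree := by
    rw [natDegree_eq_of_degree_eq (degree_sub_eq_left_of_degree_lt hlt), hdeg]
  have hR : expand (X ^ p * f - C μ * g) * s - expand (X ^ p * φ - C μ * ψ) =
      HahnSeries.single (-(p : ℤ)) 1 * (expand f * s - expand φ) -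
        HahnSeries.single 0 μ * (expand g * s - expand ψ) := by
    rw [← expand_X_pow, ← expand_C]
    simp only [map_sub, map_mul]
    ring
  have hG : expand (C μ⁻¹ * f) * s - expand (C μ⁻¹ * φ) =
      HahnSeries.single 0 μ⁻¹ * (expand f * s - expand φ) := by
    rw [← expand_C]
    simp only [map_mul]
    ring
  refine ⟨hmonic.sub_of_left hlt, ?_, ?_, ?_, ?_⟩ <;> simp only [hd]
  · have := natDegree_C_mul_le μ⁻¹ f
    omega
  · intro k hk
    rw [hR, HahnSeries.coeff_sub, HahnSeries.coeff_single_mul, HahnSeries.coeff_single_mul]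
    push_cast at hk
    rcases (show k ≤ f.natDegree by omega).lt_or_eq with hk | rfl
    · rw [h3 _ (by omega), h4 _ (by omega), mul_zero, mul_zero, sub_zero]
    · rw [show (f.natDegree : ℤ) - -(p : ℤ) = m + 1 - f.natDegree by omega, hμ, sub_zero, h5,
        one_mul, mul_one, sub_self]
  · intro k hk
    push_cast at hk
    rw [hG, HahnSeries.coeff_single_mul, h3 _ (by omega), mul_zero]
  · rw [hG, HahnSeries.coeff_single_mul,
      show ((p + f.natDegree : ℕ) : ℤ) - 0 = m + 1 - f.natDegree by omega, hμ,
      inv_mul_cancel₀ hμ0]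

lemma Invariant.step {S : RatFunc F} {m : ℕ} {st : F[X] × F[X] × F[X] × F[X]}
    (h : Invariant (expandRat S) m st) : Invariant (expandRat S) (m + 1) (BMstep F S m st) := by
  obtain ⟨f, φ, g, ψ⟩ := st
  have hle : f.natDegree ≤ m := le_of_add_le_right h.natDegree_add_le
  have hμ : (expand f * expandRat S - expand φ).coeff (m + 1 - f.natDegree) =
      coeffAtInf (algebraMap F[X] (RatFunc F) f * S) ((f.natDegree : ℤ) - m - 1) := by
    rw [coeffAtInf_eq, map_mul, expandRat_algebraMap, HahnSeries.coeff_sub,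
      coeff_expand_of_pos φ (by omega), sub_zero]
    congr 1
    ring
  simp only [BMstep]
  generalize coeffAtInf (algebraMap F[X] (RatFunc F) f * S) ((f.natDegree : ℤ) - m - 1) = μ at hμ ⊢
  split_ifs with hc
  · by_cases hp : (0 : ℤ) ≤ 2 * f.natDegree - m - 1
    · exact h.step_of_nonneg (by omega) hμ
    · obtain rfl : μ = 0 := by tauto
      simpa using h.step_of_eq_zero hμ
  · push Not at hc
    exact h.step_of_neg (by omega) hμ hc.1

lemma invariant_BM {S : RatFunc F} (hS : ∀ k : ℤ, k ≤ 0 → (expandRat S).coeff k = 0) (m : ℕ) :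
    Invariant (expandRat S) m (BM F S m) := by
  induction m with
  | zero => exact Invariant.zero hS
  | succ m ih => exact ih.step

lemma Invariant.natDegree_le {s : LaurentSeries F} {m : ℕ} {st : F[X] × F[X] × F[X] × F[X]}
    (h : Invariant s m st) {P Q : F[X]} (hQ : Q ≠ 0) (hs : s * expand Q = expand P) :
    st.1.natDegree ≤ Q.natDegree := by
  obtain ⟨f, φ, g, ψ⟩ := st
  set G := expand g * s - expand ψ with hG
  have hG0 : G ≠ 0 := fun h0 => by
    have := h.coeff_snd_natDegree
    simp only [← hG, h0, HahnSeries.coeff_zero] at this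
    exact zero_ne_one this
  have hQ' : expand Q ≠ 0 := (map_ne_zero_iff _ expand_injective).2 hQ
  have hprod : G * expand Q = expand (g * P - ψ * Q) := by
    rw [map_sub, map_mul, map_mul, ← hs, hG]
    ring
  have hN : g * P - ψ * Q ≠ 0 := fun h0 => by
    rw [h0, map_zero] at hprod
    exact mul_ne_zero hG0 hQ' hprod
  have hord := HahnSeries.order_mul hG0 hQ'
  rw [hprod, order_expand hN, order_expand hQ] at hord
  have hle : (f.natDegree : ℤ) ≤ G.order := by
    by_contra! hlt
    exact hG0 (HahnSeries.coeff_order_eq_zero.1 (h.coeff_snd _ hlt))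
  simp only
  omega

lemma coeff_eq_zero_of_degree_lt {s : LaurentSeries F} {P Q : F[X]} (hPQ : P.degree < Q.degree)
    (hs : s * expand Q = expand P) (k : ℤ) (hk : k ≤ 0) : s.coeff k = 0 := by
  have hQ : Q ≠ 0 := ne_zero_of_degree_gt hPQ
  have hQ' : expand Q ≠ 0 := (map_ne_zero_iff _ expand_injective).2 hQ
  by_cases hs0 : s = 0
  · simp [hs0]
  have hP : P ≠ 0 := fun h0 => by
    rw [h0, map_zero] at hs
    exact mul_ne_zero hs0 hQ' hs
  have hord := HahnSeries.order_mul hs0 hQ'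
  rw [hs, order_expand hP, order_expand hQ] at hord
  have := natDegree_lt_natDegree hP hPQ
  exact HahnSeries.coeff_eq_zero_of_lt_order (by omega)

open scoped Classical in
lemma natDegree_errLoc {n : ℕ} (α e : Fin n → F) :
    (errLoc F α e).natDegree = (Finset.univ.filter (fun j => e j ≠ 0)).card := by
  simp [errLoc, natDegree_prod_of_monic _ _ fun j _ => monic_X_sub_C (α j)]

lemma errLoc_ne_zero {n : ℕ} (α e : Fin n → F) : errLoc F α e ≠ 0 :=
  (monic_prod_of_monic _ _ fun j _ => monic_X_sub_C (α j)).ne_zero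

lemma degree_errEval_lt {n : ℕ} (α e : Fin n → F) :
    (errEval F α e).degree < (errLoc F α e).degree := by
  rw [degree_eq_natDegree (errLoc_ne_zero α e), natDegree_errLoc, ← mem_degreeLT]
  refine Submodule.sum_mem _ fun j hj => ?_
  rw [mem_degreeLT, degree_C_mul (Finset.mem_filter.1 hj).2, degree_prod]
  simp only [degree_X_sub_C, Finset.sum_const, nsmul_eq_mul, mul_one, Nat.cast_lt]
  exact Finset.card_erase_lt_of_mem hj

lemma expandRat_synd_mul {n : ℕ} (α e : Fin n → F) :
    expandRat (synd F α e) * expand (errLoc F α e) = expand (errEval F α e) := by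
  rw [← expandRat_algebraMap, ← expandRat_algebraMap, ← map_mul, synd, div_mul_cancel₀]
  exact RatFunc.algebraMap_ne_zero (errLoc_ne_zero α e)

end BerlekampMassey

open scoped Classical in
/-- For all `m`, the degree of the polynomial `f^(m)` produced by the
Berlekamp--Massey algorithm is at most `t`, the weight of the error vector. -/
theorem berlekamp_massey_degree_le_weight {F : Type*} [Field F] [Fintype F] {n : ℕ}
    (α : Fin n → F) (hα : Function.Injective α) (e : Fin n → F)
    (t : ℕ) (ht : t = (Finset.univ.filter (fun j => e j ≠ 0)).card)
    (S : RatFunc F) (hS : S = synd F α e) (m : ℕ) :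
    (BM F S m).1.natDegree ≤ t := by
  subst hS ht
  rw [← BerlekampMassey.natDegree_errLoc α e]
  have hs := BerlekampMassey.expandRat_synd_mul α e
  exact (BerlekampMassey.invariant_BM (BerlekampMassey.coeff_eq_zero_of_degree_lt
    (BerlekampMassey.degree_errEval_lt α e) hs) m).natDegree_le
    (BerlekampMassey.errLoc_ne_zero α e) hs
end

section
/- For every m ≥ 0, the Berlekamp–Massey data satisfies the determinant identity f^(m)ψ^(m) − g^(m)φ^(m) = −1. -/
open Polynomial
open scoped Classical

/-- A Berlekamp--Massey step preserves the determinant. -/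
theorem BMstep_det {F : Type*} [Field F] (S : RatFunc F) (m : ℕ)
    (st : Polynomial F × Polynomial F × Polynomial F × Polynomial F) :
    (BMstep F S m st).1 * (BMstep F S m st).2.2.2 -
        (BMstep F S m st).2.2.1 * (BMstep F S m st).2.1 =
      st.1 * st.2.2.2 - st.2.2.1 * st.2.1 := by
  unfold BMstep
  extract_lets f φ g ψ d μ p
  split_ifs with h
  · ring
  · have hμ : C μ * C μ⁻¹ = (1 : F[X]) := by
      rw [← C_mul, mul_inv_cancel₀ fun h0 => h (Or.inl h0), C_1]
    linear_combination (f * ψ - g * φ) * hμ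

/-- The determinant identity for the Berlekamp--Massey data:
`f^(m)ψ^(m) - g^(m)φ^(m) = -1` for every `m ≥ 0`. -/
theorem berlekamp_massey_det {F : Type*} [Field F] [Fintype F] {n : ℕ}
    (α : Fin n → F) (hα : Function.Injective α) (e : Fin n → F)
    (S : RatFunc F) (hS : S = synd F α e) (m : ℕ) :
    (BM F S m).1 * (BM F S m).2.2.2 - (BM F S m).2.2.1 * (BM F S m).2.1 = -1 := by
  induction m with
  | zero => simp [BM]
  | succ m ih => rw [BM, BMstep_det, ih]
end

section
/- (Horiguchi error evaluation formula for Reed–Solomon codes.) For every m ≥ 2t and every j with e_j ≠ 0, the error value satisfies e_j = ((f^e)'(α_j) · g^(m)(α_j))^{−1}, where g^(m) is the auxiliary polynomial of the Berlekamp–Massey algorithm and (f^e)' is the formal derivative of the error locator. -/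
open Polynomial
open scoped Classical

section CoeffAtInf

variable {F : Type*} [Field F]

theorem aeval_inv_X_mul_X_pow (P : F[X]) (N : ℕ) (hN : P.natDegree ≤ N) :
    aeval (RatFunc.X⁻¹ : RatFunc F) P * RatFunc.X ^ N =
      algebraMap F[X] (RatFunc F) (P.reflect N) := by
  have hX : (RatFunc.X : RatFunc F) ≠ 0 := RatFunc.X_ne_zero
  let _ : Invertible (RatFunc.X⁻¹ : RatFunc F) := invertibleOfNonzero (inv_ne_zero hX)
  have h := eval₂_reflect_mul_pow (algebraMap F (RatFunc F)) (RatFunc.X⁻¹ : RatFunc F) N P hN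
  have hinv : ⅟(RatFunc.X⁻¹ : RatFunc F) = RatFunc.X := by simp
  have heval : ∀ p : F[X], eval₂ (algebraMap F (RatFunc F)) RatFunc.X p =
      algebraMap F[X] (RatFunc F) p := fun p => by
    rw [← RatFunc.algebraMap_X, ← aeval_def, aeval_algebraMap_apply, aeval_X_left_apply]
  rw [hinv, heval] at h
  rw [aeval_def, ← h, mul_assoc, ← mul_pow, inv_mul_cancel₀ hX, one_pow, mul_one]

theorem aeval_inv_X_eq (P : F[X]) (N : ℕ) (hN : P.natDegree ≤ N) :
    aeval (RatFunc.X⁻¹ : RatFunc F) P =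
      RatFunc.X ^ (-(N : ℤ)) * algebraMap F[X] (RatFunc F) (P.reflect N) := by
  rw [← aeval_inv_X_mul_X_pow P N hN, zpow_neg, zpow_natCast]
  have : (RatFunc.X : RatFunc F) ≠ 0 := RatFunc.X_ne_zero
  field_simp

theorem aeval_inv_X_ne_zero {P : F[X]} (hP : P ≠ 0) : aeval (RatFunc.X⁻¹ : RatFunc F) P ≠ 0 := by
  rw [aeval_inv_X_eq P _ le_rfl]
  refine mul_ne_zero (zpow_ne_zero _ RatFunc.X_ne_zero) ?_
  simpa [reflect_eq_zero_iff] using hP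

/-- The coefficients at infinity of `P / Q` are those of `P(1/x) / Q(1/x)` at zero. -/
theorem coeffAtInf_div (P : F[X]) {Q : F[X]} (hQ : Q ≠ 0) (a : ℤ) :
    coeffAtInf (algebraMap F[X] (RatFunc F) P / algebraMap F[X] (RatFunc F) Q) a =
      (((aeval (RatFunc.X⁻¹ : RatFunc F) P / aeval (RatFunc.X⁻¹ : RatFunc F) Q : RatFunc F)) :
        LaurentSeries F).coeff (-a) := by
  unfold coeffAtInf
  set h := algebraMap F[X] (RatFunc F) P / algebraMap F[X] (RatFunc F) Q with hh
  have hd : h.denom ≠ 0 := h.denom_ne_zero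
  have hcross : P * h.denom = h.num * Q := by
    have h1 := RatFunc.num_div_denom h
    rw [hh, div_eq_div_iff (by simpa using hd) (by simpa using hQ), ← map_mul, ← map_mul] at h1
    exact (RatFunc.algebraMap_injective F h1).symm
  have hv : aeval (RatFunc.X⁻¹ : RatFunc F) P / aeval (RatFunc.X⁻¹ : RatFunc F) Q =
      aeval (RatFunc.X⁻¹ : RatFunc F) h.num / aeval (RatFunc.X⁻¹ : RatFunc F) h.denom := by
    rw [div_eq_div_iff (aeval_inv_X_ne_zero hQ) (aeval_inv_X_ne_zero hd), ← map_mul, ← map_mul,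
      hcross]
  rw [hv, aeval_inv_X_eq _ _ (le_refl h.num.natDegree),
    aeval_inv_X_eq _ _ (le_refl h.denom.natDegree),
    mul_div_mul_comm, ← zpow_sub₀ RatFunc.X_ne_zero]
  rw [show -(h.num.natDegree : ℤ) - -(h.denom.natDegree : ℤ) =
    h.denom.natDegree - h.num.natDegree by ring]
  rfl

theorem coe_algebraMap_eq_coe_powerSeries (P : F[X]) :
    ((algebraMap F[X] (RatFunc F) P : RatFunc F) : LaurentSeries F) =
      ((P : PowerSeries F) : LaurentSeries F) :=
  (RatFunc.coe_coe P).symm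

theorem coeff_aeval_inv_X (P : F[X]) {b : ℤ} (hb : 0 < b) :
    ((aeval (RatFunc.X⁻¹ : RatFunc F) P : RatFunc F) : LaurentSeries F).coeff b = 0 := by
  rw [aeval_inv_X_eq _ _ (le_refl P.natDegree), map_mul, map_zpow₀, RatFunc.coe_X,
    coe_algebraMap_eq_coe_powerSeries, ← RatFunc.single_zpow, HahnSeries.coeff_single_mul,
    one_mul, PowerSeries.coeff_coe,
    if_neg (by omega), Polynomial.coeff_coe, coeff_reflect, revAt_eq_self_of_lt (by omega)]
  exact coeff_eq_zero_of_natDegree_lt (by omega)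

/-- The coefficient at infinity of `x ^ a`, `a < 0`, in `P / Q`, read off a remainder of `P`
modulo `Q` when this remainder divided by `Q` has degree at most `a`. -/
theorem coeffAtInf_div_of_remainder {P Q φ r : F[X]} (hQ : Q.Monic) (hP : P = φ * Q + r)
    {a : ℤ} (ha : a < 0) (hr : ∀ i : ℕ, Q.natDegree + a < i → r.coeff i = 0) :
    coeffAtInf (algebraMap F[X] (RatFunc F) P / algebraMap F[X] (RatFunc F) Q) a =
      if 0 ≤ Q.natDegree + a then r.coeff (Q.natDegree + a).toNat else 0 := by
  have hQ' := aeval_inv_X_ne_zero hQ.ne_zero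
  rw [coeffAtInf_div P hQ.ne_zero, hP, map_add, map_mul, add_div, mul_div_cancel_right₀ _ hQ',
    map_add, HahnSeries.coeff_add, coeff_aeval_inv_X _ (by omega), zero_add]
  split_ifs with h
  · obtain ⟨N, hN⟩ := Int.eq_ofNat_of_zero_le h
    have hrN : r.natDegree ≤ N := natDegree_le_iff_coeff_eq_zero.2 fun i hi => hr i (by omega)
    have hconst : PowerSeries.constantCoeff (Q.reverse : PowerSeries F) = 1 := by
      rw [Polynomial.constantCoeff_coe, coeff_zero_reverse, hQ.leadingCoeff]
    have hinv : ((Q.reverse : PowerSeries F) : LaurentSeries F) ≠ 0 := fun h0 => by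
      have h1 : (Q.reverse : PowerSeries F) = 0 :=
        HahnSeries.ofPowerSeries_injective (Γ := ℤ) (by simpa using h0)
      simp [h1] at hconst
    have hdiv : ((r.reflect N : PowerSeries F) : LaurentSeries F) /
        ((Q.reverse : PowerSeries F) : LaurentSeries F) =
        (((r.reflect N : PowerSeries F) * (Q.reverse : PowerSeries F)⁻¹ : PowerSeries F) :
          LaurentSeries F) := by
      rw [div_eq_iff hinv, ← PowerSeries.coe_mul, mul_assoc, PowerSeries.inv_mul_cancel, mul_one]
      simp [hconst]
    rw [aeval_inv_X_eq _ _ hrN, aeval_inv_X_eq _ _ (le_refl Q.natDegree), mul_div_mul_comm,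
      ← zpow_sub₀ RatFunc.X_ne_zero, map_mul, map_zpow₀, map_div₀, RatFunc.coe_X,
      coe_algebraMap_eq_coe_powerSeries, coe_algebraMap_eq_coe_powerSeries, ← RatFunc.single_zpow,
      HahnSeries.coeff_single_mul, one_mul, show Q.reflect Q.natDegree = Q.reverse from rfl,
      hdiv, PowerSeries.coeff_coe, if_neg (by omega),
      show (-a - (-(N : ℤ) - -(Q.natDegree : ℤ))).natAbs = 0 by omega]
    simp [hconst, hN, coeff_reflect]
  · have : r = 0 := by
      ext i
      exact hr i (by omega)
    simp [this]

end CoeffAtInf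

section BerlekampMassey

variable {F : Type*} [Field F]

/-- The loop invariant of the Berlekamp--Massey algorithm for the syndrome `P / Q`. -/
structure BMInvariant_s8 (P Q : F[X]) (m : ℕ) (f φ g ψ : F[X]) : Prop where
  monic : f.Monic
  det_eq : f * ψ - φ * g = -1
  natDegree_le : g.natDegree + f.natDegree ≤ m
  residual : ∀ i, Q.natDegree + f.natDegree ≤ i + m → (f * P - φ * Q).coeff i = 0
  aux_monic : (g * P - ψ * Q).Monic
  aux_natDegree : (g * P - ψ * Q).natDegree + f.natDegree = Q.natDegree

namespace BMInvariant_s8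

variable {P Q f φ g ψ : F[X]} {m : ℕ}

theorem initial (hQ : Q.Monic) (hdeg : P.degree < Q.degree) : BMInvariant_s8 P Q 0 1 0 0 (-1) where
  monic := monic_one
  det_eq := by simp
  natDegree_le := by simp
  residual i hi := by
    have : Q.degree ≤ i := by
      rw [degree_eq_natDegree hQ.ne_zero]
      exact_mod_cast (by simpa using hi : Q.natDegree ≤ i)
    simpa using coeff_eq_zero_of_degree_lt (hdeg.trans_le this)
  aux_monic := by simpa using hQ
  aux_natDegree := by simp

theorem step_zero (h : BMInvariant_s8 P Q m f φ g ψ)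
    (hμ : m + 1 ≤ Q.natDegree + f.natDegree →
      (f * P - φ * Q).coeff (Q.natDegree + f.natDegree - (m + 1)) = 0) :
    BMInvariant_s8 P Q (m + 1) f φ g ψ where
  monic := h.monic
  det_eq := h.det_eq
  natDegree_le := h.natDegree_le.trans m.le_succ
  residual i hi := by
    rcases Nat.lt_or_ge (i + m) (Q.natDegree + f.natDegree) with hlt | hle
    · have := hμ (by omega)
      rwa [show Q.natDegree + f.natDegree - (m + 1) = i by omega] at this
    · exact h.residual i hle
  aux_monic := h.aux_monic
  aux_natDegree := h.aux_natDegree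

theorem step_same_degree (h : BMInvariant_s8 P Q m f φ g ψ) {k : ℕ}
    (hk : 2 * f.natDegree = k + m + 1) :
    let μ := (f * P - φ * Q).coeff (Q.natDegree + f.natDegree - (m + 1))
    BMInvariant_s8 P Q (m + 1) (f - C μ * X ^ k * g) (φ - C μ * X ^ k * ψ) g ψ := by
  intro μ
  have hgd := h.natDegree_le
  have hlt : (C μ * X ^ k * g).degree < f.degree := by
    rw [degree_eq_natDegree h.monic.ne_zero, degree_lt_iff_coeff_zero]
    intro i hi
    rw [mul_assoc, coeff_C_mul, coeff_X_pow_mul', if_pos (by omega),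
      coeff_eq_zero_of_natDegree_lt (by omega), mul_zero]
  have hnat : (f - C μ * X ^ k * g).natDegree = f.natDegree :=
    natDegree_eq_of_degree_eq (degree_sub_eq_left_of_degree_lt hlt)
  have haux := h.aux_natDegree
  refine ⟨h.monic.sub_of_left hlt, ?_, ?_, ?_, h.aux_monic, ?_⟩
  · linear_combination h.det_eq
  · omega
  · intro i hi
    rw [hnat] at hi
    have hres : (f - C μ * X ^ k * g) * P - (φ - C μ * X ^ k * ψ) * Q =
        (f * P - φ * Q) - C μ * (X ^ k * (g * P - ψ * Q)) := by ring
    rw [hres, coeff_sub, coeff_C_mul, coeff_X_pow_mul', if_pos (by omega)]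
    rcases Nat.lt_or_ge (i + m) (Q.natDegree + f.natDegree) with hlt' | hle
    · rw [show i - k = (g * P - ψ * Q).natDegree by omega, coeff_natDegree,
        h.aux_monic.leadingCoeff, show i = Q.natDegree + f.natDegree - (m + 1) by omega]
      simp [μ]
    · rw [h.residual i hle, coeff_eq_zero_of_natDegree_lt (by omega)]
      simp
  · omega

theorem step_change_degree (h : BMInvariant_s8 P Q m f φ g ψ) {k : ℕ}
    (hk : 2 * f.natDegree + k = m + 1)
    (hm : m + 1 ≤ Q.natDegree + f.natDegree)
    (hμ : (f * P - φ * Q).coeff (Q.natDegree + f.natDegree - (m + 1)) ≠ 0) :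
    let μ := (f * P - φ * Q).coeff (Q.natDegree + f.natDegree - (m + 1))
    BMInvariant_s8 P Q (m + 1) (X ^ k * f - C μ * g) (X ^ k * φ - C μ * ψ)
      (C μ⁻¹ * f) (C μ⁻¹ * φ) := by
  intro μ
  have hμ' : μ ≠ 0 := hμ
  have hC : C μ * C μ⁻¹ = 1 := by rw [← C_mul, mul_inv_cancel₀ hμ', C_1]
  have hgd := h.natDegree_le
  have haux := h.aux_natDegree
  have hXf : (X ^ k * f).Monic := (monic_X_pow k).mul h.monic
  have hXfd : (X ^ k * f).natDegree = k + f.natDegree := by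
    rw [(monic_X_pow k).natDegree_mul h.monic, natDegree_X_pow]
  have hlt : (C μ * g).degree < (X ^ k * f).degree := by
    rw [degree_eq_natDegree hXf.ne_zero, degree_lt_iff_coeff_zero]
    intro i hi
    rw [coeff_C_mul, coeff_eq_zero_of_natDegree_lt (by omega), mul_zero]
  have hnat : (X ^ k * f - C μ * g).natDegree = k + f.natDegree := by
    rw [natDegree_eq_of_degree_eq (degree_sub_eq_left_of_degree_lt hlt), hXfd]
  have hnatg : (C μ⁻¹ * f).natDegree = f.natDegree := natDegree_C_mul (inv_ne_zero hμ')
  have hr : (f * P - φ * Q).natDegree = Q.natDegree + f.natDegree - (m + 1) := by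
    refine natDegree_eq_of_le_of_coeff_ne_zero ?_ hμ
    exact natDegree_le_iff_coeff_eq_zero.2 fun i hi => h.residual i (by omega)
  have hA : C μ⁻¹ * f * P - C μ⁻¹ * φ * Q = C μ⁻¹ * (f * P - φ * Q) := by ring
  have hAnat : (C μ⁻¹ * (f * P - φ * Q)).natDegree = Q.natDegree + f.natDegree - (m + 1) := by
    rw [natDegree_C_mul (inv_ne_zero hμ'), hr]
  refine ⟨hXf.sub_of_left hlt, ?_, ?_, ?_, ?_, ?_⟩
  · linear_combination (f * ψ - φ * g) * hC + h.det_eq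
  · omega
  · intro i hi
    rw [hnat] at hi
    have hres : (X ^ k * f - C μ * g) * P - (X ^ k * φ - C μ * ψ) * Q =
        X ^ k * (f * P - φ * Q) - C μ * (g * P - ψ * Q) := by ring
    rw [hres, coeff_sub, coeff_C_mul, coeff_X_pow_mul', if_pos (by omega)]
    rcases Nat.lt_or_ge (i + f.natDegree) (Q.natDegree + 1) with hlt' | hle
    · rw [show i - k = Q.natDegree + f.natDegree - (m + 1) by omega,
        show i = (g * P - ψ * Q).natDegree by omega, coeff_natDegree, h.aux_monic.leadingCoeff]
      simp [μ]
    · rw [h.residual _ (by omega), coeff_eq_zero_of_natDegree_lt (by omega)]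
      simp
  · rw [hA, Monic, leadingCoeff, hAnat, coeff_C_mul]
    exact inv_mul_cancel₀ hμ'
  · rw [hA, hAnat, hnat]
    omega

end BMInvariant_s8

theorem BMInvariant_s8.bm {P Q : F[X]} (hQ : Q.Monic) (hdeg : P.degree < Q.degree) (m : ℕ) :
    let st := BM F (algebraMap F[X] (RatFunc F) P / algebraMap F[X] (RatFunc F) Q) m
    BMInvariant_s8 P Q m st.1 st.2.1 st.2.2.1 st.2.2.2 := by
  induction m with
  | zero => exact BMInvariant_s8.initial hQ hdeg
  | succ m ih =>
    simp only [BM] at ih ⊢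
    generalize BM F (algebraMap F[X] (RatFunc F) P / algebraMap F[X] (RatFunc F) Q) m = st at ih ⊢
    obtain ⟨f, φ, g, ψ⟩ := st
    dsimp only at ih
    have hfm : f.natDegree ≤ m := by
      have := ih.natDegree_le
      omega
    have hμ := coeffAtInf_div_of_remainder hQ (show f * P = φ * Q + (f * P - φ * Q) by ring)
      (show (f.natDegree : ℤ) - m - 1 < 0 by omega) fun i hi => ih.residual i (by omega)
    rw [map_mul, mul_div_assoc] at hμ
    simp only [BMstep, hμ]
    rcases Nat.lt_or_ge (Q.natDegree + f.natDegree) (m + 1) with hlt | hle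
    · rw [if_neg (show ¬ (0 : ℤ) ≤ Q.natDegree + (f.natDegree - m - 1) by omega)]
      simpa using ih.step_zero fun h => absurd h (by omega)
    · rw [if_pos (show (0 : ℤ) ≤ Q.natDegree + (f.natDegree - m - 1) by omega),
        show ((Q.natDegree : ℤ) + (f.natDegree - m - 1)).toNat =
          Q.natDegree + f.natDegree - (m + 1) by omega]
      split_ifs with hc
      · by_cases h0 : (f * P - φ * Q).coeff (Q.natDegree + f.natDegree - (m + 1)) = 0
        · simpa [h0] using ih.step_zero fun _ => h0
        · have hp := hc.resolve_left h0
          exact ih.step_same_degree (by omega)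
      · rw [not_or, not_le] at hc
        exact ih.step_change_degree (by omega) hle hc.1

/-- After sufficiently many iterations the algorithm returns the reduced fraction itself. -/
theorem BMInvariant_s8.eq_of_two_mul_natDegree_le {P Q f φ g ψ : F[X]} {m : ℕ}
    (h : BMInvariant_s8 P Q m f φ g ψ) (hPQ : IsCoprime P Q) (hm : 2 * Q.natDegree ≤ m) :
    f = Q ∧ φ = P := by
  have haux := h.aux_natDegree
  have hres : f * P - φ * Q = 0 := by
    ext i
    exact h.residual i (by omega)
  have hQ : f * (g * P - ψ * Q) = Q := by
    linear_combination g * hres - Q * h.det_eq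
  have hP : φ * (g * P - ψ * Q) = P := by
    linear_combination ψ * hres - P * h.det_eq
  have hone : g * P - ψ * Q = 1 :=
    h.aux_monic.isUnit_iff.1 (hPQ.isUnit_of_dvd' (Dvd.intro_left _ hP) (Dvd.intro_left _ hQ))
  rw [hone, mul_one] at hP hQ
  exact ⟨hQ, hP⟩

end BerlekampMassey

section ErrorPolynomials

variable {F : Type*} [Field F] {n : ℕ} (α e : Fin n → F)

theorem errLoc_monic : (errLoc F α e).Monic :=
  monic_prod_of_monic _ _ fun j _ => monic_X_sub_C (α j)

theorem errLoc_natDegree :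
    (errLoc F α e).natDegree = (Finset.univ.filter (fun j => e j ≠ 0)).card := by
  rw [errLoc, natDegree_prod_of_monic _ _ fun j _ => monic_X_sub_C (α j)]
  simp

theorem errEval_degree_lt : (errEval F α e).degree < (errLoc F α e).degree := by
  rw [degree_eq_natDegree (errLoc_monic α e).ne_zero, errLoc_natDegree, errEval]
  refine (degree_sum_le _ _).trans_lt ((Finset.sup_lt_iff (WithBot.bot_lt_coe _)).2 fun j hj => ?_)
  have hcard := Finset.card_erase_lt_of_mem hj
  rw [degree_C_mul (by simpa using hj), degree_prod]
  simpa using hcard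

variable {e}

theorem derivative_errLoc_eval {j : Fin n} (hj : e j ≠ 0) :
    (derivative (errLoc F α e)).eval (α j) =
      ∏ k ∈ (Finset.univ.filter (fun k => e k ≠ 0)).erase j, (α j - α k) := by
  rw [errLoc,
    ← Finset.mul_prod_erase _ _ (show j ∈ Finset.univ.filter (fun k => e k ≠ 0) by simpa)]
  simp [eval_prod]

theorem errEval_eval {j : Fin n} (hj : e j ≠ 0) :
    (errEval F α e).eval (α j) = e j * (derivative (errLoc F α e)).eval (α j) := by
  rw [derivative_errLoc_eval α hj, errEval, eval_finsetSum, Finset.sum_eq_single j]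
  · simp [eval_prod]
  · intro i _ hij
    rw [eval_mul, eval_prod, Finset.prod_eq_zero (i := j) (by simp [hj, hij.symm]) (by simp),
      mul_zero]
  · simp [hj]

theorem errLoc_eval {j : Fin n} (hj : e j ≠ 0) : (errLoc F α e).eval (α j) = 0 := by
  rw [errLoc, eval_prod]
  exact Finset.prod_eq_zero (i := j) (by simpa) (by simp)

variable {α}

theorem derivative_errLoc_eval_ne_zero (hα : Function.Injective α) {j : Fin n} (hj : e j ≠ 0) :
    (derivative (errLoc F α e)).eval (α j) ≠ 0 := by
  rw [derivative_errLoc_eval α hj]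
  exact Finset.prod_ne_zero_iff.2 fun k hk =>
    sub_ne_zero.2 fun h => Finset.ne_of_mem_erase hk (hα h).symm

theorem isCoprime_errEval_errLoc (hα : Function.Injective α) :
    IsCoprime (errEval F α e) (errLoc F α e) := by
  refine IsCoprime.prod_right fun j hj => IsCoprime.symm ?_
  have hj' : e j ≠ 0 := by simpa using hj
  refine (irreducible_X_sub_C (α j)).coprime_iff_not_dvd.2 fun hdvd => ?_
  rw [dvd_iff_isRoot, IsRoot.def, errEval_eval α hj'] at hdvd
  exact mul_ne_zero hj' (derivative_errLoc_eval_ne_zero hα hj') hdvd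

end ErrorPolynomials

open scoped Classical in
/-- **Horiguchi error-evaluation formula for Reed--Solomon codes.**  For `m ≥ 2t`
and `e_j ≠ 0`, the error value is `e_j = ((f^e)'(α_j)·g^(m)(α_j))⁻¹`. -/
theorem horiguchi_formula_RS {F : Type*} [Field F] [Fintype F] {n : ℕ}
    (α : Fin n → F) (hα : Function.Injective α) (e : Fin n → F)
    (t : ℕ) (ht : t = (Finset.univ.filter (fun j => e j ≠ 0)).card)
    (S : RatFunc F) (hS : S = synd F α e) (m : ℕ) (hm : 2 * t ≤ m)
    (j : Fin n) (hj : e j ≠ 0) :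
    e j = ((Polynomial.derivative (errLoc F α e)).eval (α j) *
        (BM F S m).2.2.1.eval (α j))⁻¹ := by
  have hinv := BMInvariant_s8.bm (errLoc_monic α e) (errEval_degree_lt α e) m
  rw [show algebraMap F[X] (RatFunc F) (errEval F α e) /
    algebraMap F[X] (RatFunc F) (errLoc F α e) = S from hS.symm] at hinv
  obtain ⟨hf, hφ⟩ := hinv.eq_of_two_mul_natDegree_le (isCoprime_errEval_errLoc hα)
    (by rwa [errLoc_natDegree, ← ht])
  have hdet := congrArg (eval (α j)) hinv.det_eq
  rw [hf, hφ] at hdet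
  simp only [eval_sub, eval_mul, eval_neg, eval_one, errLoc_eval α hj, errEval_eval α hj] at hdet
  refine eq_inv_of_mul_eq_one_left ?_
  linear_combination -hdet
end
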